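/- Let A = (a_{ij}), B ∈ ^cΞ with ro(A) = co(B), and suppose that B − R·E^θ_{h,h+1} is a diagonal matrix for some h with 1 ≤ h ≤ r and some R ∈ ℕ. Then, as functions on X_c × X_c, e_B ∗ e_A = Σ_t q^{Σ_{(j,u): j > u} a_{hj} t_u} · (Π_{u=1}^{𝔫} [a_{hu} + t_u ; t_u]_q) · e_{A + Σ_{u=1}^{𝔫} t_u (E^θ_{h,u} − E^θ_{h+1,u})}, where the sum is over all t = (t_1, …, t_𝔫) ∈ ℕ^𝔫 with Σ_{u=1}^{𝔫} t_u = R such that t_u ≤ a_{h+1,u} for all u if h < r, and t_u + t_{𝔫+1−u} ≤ a_{h+1,u} for all u if h = r. -/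

import Mathlib

open scoped Classical

noncomputable section

namespace FlagC

variable {k V : Type*} [Field k] [AddCommGroup V] [Module k V]

/-- The orthogonal complement `{v | ∀ u ∈ N, Φ u v = 0}` of a submodule with respect to a
bilinear form. -/
def perpB (Φ : V →ₗ[k] V →ₗ[k] k) (N : Submodule k V) : Submodule k V where
  carrier := {v | ∀ u ∈ N, Φ u v = 0}
  zero_mem' := fun u _ => map_zero (Φ u)
  add_mem' := fun {a b} ha hb u hu => by rw [map_add, ha u hu, hb u hu, add_zero]
  smul_mem' := fun c v hv u hu => by rw [map_smul, hv u hu, smul_zero]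

/-- A complete isotropic flag of type `C`:  `0 = L 0 ⊆ L 1 ⊆ ⋯ ⊆ L nn = V` with
`L (nn - i) = (L i)^⊥`.  (The values `L i` for `i > nn` are required to equal `⊤` so that a
flag is determined by finitely many submodules.) -/
def IsFlag (Φ : V →ₗ[k] V →ₗ[k] k) (nn : ℕ) (L : ℕ → Submodule k V) : Prop :=
  L 0 = ⊥ ∧ (∀ i, L i ≤ L (i + 1)) ∧ (∀ i, nn ≤ i → L i = ⊤) ∧
    ∀ i, i ≤ nn → L (nn - i) = perpB Φ (L i)

/-- The set `X_c` of complete isotropic flags. -/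
def Flags (Φ : V →ₗ[k] V →ₗ[k] k) (nn : ℕ) := {L : ℕ → Submodule k V // IsFlag Φ nn L}

/-- `dim_k (p / s)`, the dimension of the quotient of `p` by `s ∩ p`. -/
def relDim (p s : Submodule k V) : ℕ :=
  Module.finrank k (↥p ⧸ (s.comap p.subtype))

/-- The characteristic function `e_A` of the orbit `O_A`: the set of pairs of flags `(L, L′)`
with `dim_k (Lᵢ ∩ L′ⱼ)/(L_{i-1} ∩ L′ⱼ + Lᵢ ∩ L′_{j-1}) = A i j` for all `1 ≤ i, j ≤ nn`. -/
def eMat (Φ : V →ₗ[k] V →ₗ[k] k) (nn : ℕ) (A : ℕ → ℕ → ℤ) :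
    Flags Φ nn × Flags Φ nn → ℚ := fun LL =>
  if ∀ i ∈ Finset.Icc 1 nn, ∀ j ∈ Finset.Icc 1 nn,
      (relDim ((LL.1.1 i) ⊓ (LL.2.1 j))
        (((LL.1.1 (i - 1)) ⊓ (LL.2.1 j)) ⊔ ((LL.1.1 i) ⊓ (LL.2.1 (j - 1)))) : ℤ) = A i j
  then 1 else 0

/-- Convolution product of functions on `X_c × X_c`. -/
def conv (Φ : V →ₗ[k] V →ₗ[k] k) (nn : ℕ)
    (f g : Flags Φ nn × Flags Φ nn → ℚ) : Flags Φ nn × Flags Φ nn → ℚ :=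
  fun LL => ∑ᶠ L' : Flags Φ nn, f (LL.1, L') * g (L', LL.2)

/-- Membership in `^cΞ`: an `nn × nn` matrix of natural numbers (recorded as an
integer-valued function on `[1,nn] × [1,nn]`) with total sum `2d` and with
`a_{ij} = a_{nn+1-i, nn+1-j}`. -/
def MemXiC (nn d : ℕ) (A : ℕ → ℕ → ℤ) : Prop :=
  (∀ i ∈ Finset.Icc 1 nn, ∀ j ∈ Finset.Icc 1 nn, 0 ≤ A i j) ∧
  (∑ i ∈ Finset.Icc 1 nn, ∑ j ∈ Finset.Icc 1 nn, A i j) = 2 * d ∧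
  ∀ i ∈ Finset.Icc 1 nn, ∀ j ∈ Finset.Icc 1 nn, A i j = A (nn + 1 - i) (nn + 1 - j)

/-- Row sums. -/
def roM (nn : ℕ) (A : ℕ → ℕ → ℤ) (i : ℕ) : ℤ := ∑ j ∈ Finset.Icc 1 nn, A i j

/-- Column sums. -/
def coM (nn : ℕ) (A : ℕ → ℕ → ℤ) (j : ℕ) : ℤ := ∑ i ∈ Finset.Icc 1 nn, A i j

/-- `E^θ_{ij} = E_{ij} + E_{nn+1-i, nn+1-j}`. -/
def Eth (nn i j : ℕ) : ℕ → ℕ → ℤ := fun a b =>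
  (if a = i ∧ b = j then 1 else 0) + (if a = nn + 1 - i ∧ b = nn + 1 - j then 1 else 0)

/-- The Gaussian binomial coefficient `[m; t]_q = ∏_{i=1}^{t} (q^{m-i+1} - 1)/(q^i - 1)`. -/
def qbinom (q : ℚ) (m : ℤ) (t : ℕ) : ℚ :=
  ∏ i ∈ Finset.Icc 1 t, (q ^ (m - (i : ℤ) + 1) - 1) / (q ^ (i : ℤ) - 1)

end FlagC

open FlagC

/-!
`(e_B * e_A)(L, M)` counts the flags `L'` such that `(L, L')` has position `B` and `(L', M)` has
position `A`. The first condition says that `L'` arises from `L` by shrinking `L h` to a subspace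
`S ⊇ L (h - 1)` of codimension `R` (and replacing `L (n - h)` by `Sᗮ`). If `t u` is the dimension of
the `u`-th graded piece of `L h / S` for the filtration induced by `M`, then passing from `(L', M)`
to `(L, M)` moves `t u` from entry `(h + 1, u)` to entry `(h, u)`, and orthogonality moves the
mirrored entries along. So `(L, M)` determines `t`, and it remains to count the subspaces `S`
between `L (h - 1)` and `L h` whose graded dimensions over `L (h - 1)` are the `a_{hu}`. Adding one
step of the filtration at a time, this count is a product of Gaussian binomials and powers of `q`.
-/

namespace FlagC

open Finset Module

section QBinomial

lemma prod_pow_sub_pow_eq_prod_pow_mul (q : ℚ) (a s : ℕ) :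
    ∏ i ∈ range a, (q ^ (a + s) - q ^ i) =
      (∏ i ∈ range a, q ^ i) * ∏ i ∈ range a, (q ^ (s + i + 1) - 1) := by
  rw [← prod_range_reflect (fun i => q ^ (s + i + 1) - 1), ← prod_mul_distrib]
  refine prod_congr rfl fun i hi => ?_
  rw [mul_sub, ← pow_add, mul_one]
  congr 2
  have := mem_range.1 hi
  omega

lemma qbinom_add_mul_prod {q : ℚ} (hq : 1 < q) (a t : ℕ) :
    qbinom q ((a : ℤ) + t) t * ∏ i ∈ range t, (q ^ (i + 1) - 1) =
      ∏ i ∈ range t, (q ^ (a + i + 1) - 1) := by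
  rw [qbinom, ← Ico_add_one_right_eq_Icc, prod_Ico_eq_prod_range, Nat.add_sub_cancel,
    ← prod_range_reflect (fun i => q ^ (a + i + 1) - 1), ← prod_mul_distrib]
  refine prod_congr rfl fun i hi => ?_
  have hexp : (a : ℤ) + t - ((1 + i : ℕ) : ℤ) + 1 = ((a + (t - 1 - i) + 1 : ℕ) : ℤ) := by
    have := mem_range.1 hi
    omega
  rw [hexp, zpow_natCast, zpow_natCast, add_comm 1 i,
    div_mul_cancel₀ _ (sub_pos.2 (one_lt_pow₀ hq i.succ_ne_zero)).ne']

lemma qbinom_add_mul_prod_pow_sub_pow {q : ℚ} (hq : 1 < q) (a t : ℕ) :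
    qbinom q ((a : ℤ) + t) t * ∏ i ∈ range a, (q ^ a - q ^ i) =
      ∏ i ∈ range a, (q ^ (a + t) - q ^ i) := by
  have hpos : ∏ i ∈ range t, (q ^ (i + 1) - 1) ≠ 0 := prod_ne_zero_iff.2 fun i _ =>
    (sub_pos.2 (one_lt_pow₀ hq i.succ_ne_zero)).ne'
  have hsplit : (∏ i ∈ range t, (q ^ (i + 1) - 1)) * ∏ i ∈ range a, (q ^ (t + i + 1) - 1) =
      (∏ i ∈ range a, (q ^ (i + 1) - 1)) * ∏ i ∈ range t, (q ^ (a + i + 1) - 1) := by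
    rw [← prod_range_add (fun i => q ^ (i + 1) - 1), add_comm t a, prod_range_add]
  have hdenom := prod_pow_sub_pow_eq_prod_pow_mul q a 0
  simp only [add_zero, zero_add] at hdenom
  rw [hdenom, prod_pow_sub_pow_eq_prod_pow_mul]
  apply mul_left_cancel₀ hpos
  linear_combination (∏ i ∈ range a, q ^ i) * ((∏ i ∈ range a, (q ^ (i + 1) - 1)) *
    qbinom_add_mul_prod hq a t - hsplit)

end QBinomial

section LinearIndependentTuples

lemma natCard_eq_mul_of_natCard_fiber {α β : Type*} [Finite α] [Finite β] (f : α → β) (c : ℚ)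
    (hc : ∀ b, (Nat.card {a // f a = b} : ℚ) = c) :
    (Nat.card α : ℚ) = Nat.card β * c := by
  have := Fintype.ofFinite β
  rw [← Nat.card_congr (Equiv.sigmaFiberEquiv f), Nat.card_sigma, Nat.cast_sum,
    sum_congr rfl fun b _ => hc b, sum_const, card_univ, nsmul_eq_mul, Nat.card_eq_fintype_card]

variable {k E F : Type*} [Field k] [Fintype k] [AddCommGroup E] [Module k E]
  [FiniteDimensional k E] [AddCommGroup F] [Module k F]

lemma natCard_fiber_comp_of_surjective {f : E →ₗ[k] F} (hf : Function.Surjective f) (a : ℕ)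
    (w : Fin a → F) :
    Nat.card {v : Fin a → E // f ∘ v = w} = Fintype.card k ^ (finrank k f.ker * a) := by
  have e : {v : Fin a → E // f ∘ v = w} ≃ (Fin a → f.ker) :=
    (Equiv.subtypeEquivRight fun v => funext_iff).trans <| Equiv.subtypePiEquivPi.trans <|
      Equiv.piCongrRight fun i => f.toAddMonoidHom.fiberEquivKerOfSurjective hf (w i)
  rw [Nat.card_congr e, Nat.card_fun, Module.natCard_eq_pow_finrank (K := k), Nat.card_fin,
    Nat.card_eq_fintype_card, pow_mul]

lemma natCard_linearIndependent_comp (f : E →ₗ[k] F) {a : ℕ} (ha : a ≤ finrank k f.range) :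
    (Nat.card {v : Fin a → E // LinearIndependent k (f ∘ v)} : ℚ) =
      (Fintype.card k : ℚ) ^ (finrank k f.ker * a) *
        ∏ i ∈ range a, ((Fintype.card k : ℚ) ^ finrank k f.range - (Fintype.card k : ℚ) ^ i) := by
  have : Finite E := Module.finite_of_finite k
  have : Finite f.range := Module.finite_of_finite k
  have hcoe (v : Fin a → E) :
      LinearIndependent k (f ∘ v) ↔ LinearIndependent k (f.rangeRestrict ∘ v) :=
    f.range.subtype.linearIndependent_iff (v := f.rangeRestrict ∘ v) f.range.ker_subtype
  rw [natCard_eq_mul_of_natCard_fiber (fun v : {v : Fin a → E // LinearIndependent k (f ∘ v)} =>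
    (⟨f.rangeRestrict ∘ v.1, (hcoe v).1 v.2⟩ : {w : Fin a → f.range // LinearIndependent k w}))
    ((Fintype.card k : ℚ) ^ (finrank k f.ker * a)) ?_, card_linearIndependent ha, mul_comm]
  · rw [Nat.cast_prod, ← Fin.prod_univ_eq_prod_range
      (fun i => (Fintype.card k : ℚ) ^ finrank k f.range - (Fintype.card k : ℚ) ^ i)]
    congr 1
    refine prod_congr rfl fun i _ => ?_
    rw [Nat.cast_sub (Nat.pow_le_pow_right Fintype.card_pos (i.2.le.trans ha)), Nat.cast_pow,
      Nat.cast_pow]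
  · rintro ⟨w, hw⟩
    rw [← Nat.cast_pow, ← f.ker_rangeRestrict,
      ← natCard_fiber_comp_of_surjective f.surjective_rangeRestrict a w]
    refine congrArg _ (Nat.card_congr ?_)
    exact (Equiv.subtypeEquivRight fun v => Subtype.ext_iff).trans
      (Equiv.subtypeSubtypeEquivSubtype (q := fun v => f.rangeRestrict ∘ v = w)
        fun {v} hv => (hcoe v).2 (by rwa [hv]))

end LinearIndependentTuples

section Subspaces

variable {k V : Type*} [Field k] [AddCommGroup V] [Module k V] {P S₀ : Submodule k V} {a : ℕ}
  {v : Fin a → V}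

lemma sup_span_inf_eq (h₀ : S₀ ≤ P) (hv : LinearIndependent k (P.mkQ ∘ v)) :
    (S₀ ⊔ Submodule.span k (Set.range v)) ⊓ P = S₀ := by
  have hdisj := Submodule.range_ker_disjoint hv
  rw [P.ker_mkQ] at hdisj
  rw [sup_inf_assoc_of_le _ h₀, hdisj.eq_bot, sup_bot_eq]

variable [FiniteDimensional k V]

lemma finrank_sup_span (h₀ : S₀ ≤ P) (hv : LinearIndependent k (P.mkQ ∘ v)) :
    finrank k ↥(S₀ ⊔ Submodule.span k (Set.range v)) = finrank k S₀ + a := by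
  have hdisj := Submodule.range_ker_disjoint hv
  rw [P.ker_mkQ] at hdisj
  have hspan : finrank k ↥(Submodule.span k (Set.range v)) = a := by
    rw [finrank_span_eq_card (hv.of_comp _), Fintype.card_fin]
  have := Submodule.finrank_sup_add_finrank_inf_eq S₀ (Submodule.span k (Set.range v))
  rwa [(hdisj.symm.mono_left h₀).eq_bot, finrank_bot, add_zero, hspan] at this

variable [Fintype k]

/-- The `a`-tuples of vectors of `Q` that are linearly independent modulo `P`; a subspace `S` with
`S ⊓ P = S₀` is spanned by `S₀` and such a tuple. -/
abbrev TuplesIndepMod (P Q : Submodule k V) (a : ℕ) : Type _ :=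
  {v : Fin a → V // (∀ i, v i ∈ Q) ∧ LinearIndependent k (P.mkQ ∘ v)}

lemma natCard_tuplesIndepMod (P Q : Submodule k V) (a t : ℕ)
    (hQ : finrank k Q = finrank k ↥(Q ⊓ P) + (a + t)) :
    (Nat.card (TuplesIndepMod P Q a) : ℚ) =
      (Fintype.card k : ℚ) ^ (finrank k ↥(Q ⊓ P) * a) *
        (qbinom (Fintype.card k) ((a : ℤ) + t) t *
          ∏ i ∈ range a, ((Fintype.card k : ℚ) ^ a - (Fintype.card k : ℚ) ^ i)) := by
  set f := P.mkQ ∘ₗ Q.subtype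
  have hker : finrank k f.ker = finrank k ↥(Q ⊓ P) := by
    rw [LinearMap.ker_comp, Submodule.ker_mkQ, ← Submodule.finrank_map_subtype_eq,
      Submodule.map_comap_subtype]
  have hrange : finrank k f.range = a + t := by
    have := f.finrank_range_add_finrank_ker
    omega
  have e : TuplesIndepMod P Q a ≃ {v : Fin a → Q // LinearIndependent k (f ∘ v)} :=
    (Equiv.subtypeSubtypeEquivSubtypeInter _ _).symm.trans
      (Equiv.subtypePiEquivPi.subtypeEquiv fun _ => Iff.rfl)
  rw [Nat.card_congr e, natCard_linearIndependent_comp f (by omega), hker, hrange,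
    qbinom_add_mul_prod_pow_sub_pow (by exact_mod_cast Fintype.one_lt_card)]

lemma natCard_tuplesIndepMod_eq_mul {S₀ P Q : Submodule k V} (h₀ : S₀ ≤ Q ⊓ P) (a : ℕ) :
    (Nat.card (TuplesIndepMod P Q a) : ℚ) =
      Nat.card {S : Submodule k V // S ≤ Q ∧ S ⊓ P = S₀ ∧ finrank k S = finrank k S₀ + a} *
        ((Fintype.card k : ℚ) ^ (finrank k S₀ * a) *
          ∏ i ∈ range a, ((Fintype.card k : ℚ) ^ a - (Fintype.card k : ℚ) ^ i)) := by
  have : Finite V := Module.finite_of_finite k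
  have h₀P := h₀.trans inf_le_right
  have sup_span_le {S : Submodule k V} (hS : S₀ ≤ S) {v : Fin a → V} (hv : ∀ i, v i ∈ S) :
      S₀ ⊔ Submodule.span k (Set.range v) ≤ S :=
    sup_le hS (Submodule.span_le.2 (Set.range_subset_iff.2 hv))
  refine natCard_eq_mul_of_natCard_fiber (fun v : TuplesIndepMod P Q a =>
    ⟨S₀ ⊔ Submodule.span k (Set.range v.1), sup_span_le (h₀.trans inf_le_left) v.2.1,
      sup_span_inf_eq h₀P v.2.2, finrank_sup_span h₀P v.2.2⟩) _ ?_
  rintro ⟨S, hSQ, hSP, hS⟩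
  have hcount := natCard_tuplesIndepMod P S a 0 (by rw [hSP, hS, add_zero])
  rw [hSP, qbinom, Icc_eq_empty_of_lt one_pos, prod_empty, one_mul] at hcount
  rw [← hcount]
  refine congrArg _ (Nat.card_congr ?_)
  refine (Equiv.subtypeEquivRight fun v => Subtype.ext_iff).trans <|
    (Equiv.subtypeSubtypeEquivSubtypeInter _ (fun v : Fin a → V =>
      S₀ ⊔ Submodule.span k (Set.range v) = S)).trans (Equiv.subtypeEquivRight fun v => ?_)
  constructor
  · rintro ⟨⟨-, hv⟩, rfl⟩
    exact ⟨fun i => Submodule.mem_sup_right (Submodule.subset_span ⟨i, rfl⟩), hv⟩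
  · rintro ⟨hvS, hv⟩
    refine ⟨⟨fun i => hSQ (hvS i), hv⟩, Submodule.eq_of_le_of_finrank_eq ?_ ?_⟩
    · exact sup_span_le (hSP ▸ inf_le_left) hvS
    · rw [finrank_sup_span h₀P hv, hS]

lemma natCard_subspaces_inf_eq {S₀ P Q : Submodule k V} (h₀ : S₀ ≤ Q ⊓ P) {a t T : ℕ}
    (hP : finrank k ↥(Q ⊓ P) = finrank k S₀ + T)
    (hQ : finrank k Q = finrank k ↥(Q ⊓ P) + (a + t)) :
    (Nat.card {S : Submodule k V // S ≤ Q ∧ S ⊓ P = S₀ ∧ finrank k S = finrank k S₀ + a} : ℚ) =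
      (Fintype.card k : ℚ) ^ (a * T) * qbinom (Fintype.card k) ((a : ℤ) + t) t := by
  have hq : (1 : ℚ) < Fintype.card k := by exact_mod_cast Fintype.one_lt_card
  have hcount := natCard_tuplesIndepMod_eq_mul h₀ a
  rw [natCard_tuplesIndepMod P Q a t hQ, hP] at hcount
  have hne : (Fintype.card k : ℚ) ^ (finrank k S₀ * a) *
      ∏ i ∈ range a, ((Fintype.card k : ℚ) ^ a - (Fintype.card k : ℚ) ^ i) ≠ 0 :=
    mul_ne_zero (by positivity) <| prod_ne_zero_iff.2 fun i hi =>
      (sub_pos.2 (pow_lt_pow_right₀ hq (mem_range.1 hi))).ne'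
  apply mul_right_cancel₀ hne
  rw [← hcount]
  ring

end Subspaces

section GradedDimension

lemma inf_sup_inf_eq {α : Type*} [Lattice α] [IsModularLattice α] {u s w : α} (hus : u ≤ s)
    (hsw : s ≤ w) (x : α) : s ⊓ (u ⊔ (w ⊓ x)) = u ⊔ (s ⊓ x) := by
  rw [inf_comm, sup_inf_assoc_of_le _ hus, inf_right_comm, inf_eq_right.2 hsw]

variable {k V : Type*} [Field k] [AddCommGroup V] [Module k V]

/-- The dimension of the `j`-th graded piece of the filtration which the chain `M` induces
on `U`. -/
def grDim (M : ℕ → Submodule k V) (U : Submodule k V) (j : ℕ) : ℤ :=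
  finrank k ↥(U ⊓ M j) - finrank k ↥(U ⊓ M (j - 1))

variable {M : ℕ → Submodule k V} {U W : Submodule k V}

lemma sum_grDim (M : ℕ → Submodule k V) (U : Submodule k V) {i j : ℕ} (hij : i ≤ j) :
    ∑ b ∈ Icc (i + 1) j, grDim M U b = finrank k ↥(U ⊓ M j) - finrank k ↥(U ⊓ M i) := by
  induction j, hij using Nat.le_induction with
  | base => simp
  | succ j hij ih =>
    rw [sum_Icc_succ_top (by omega), ih, grDim, Nat.add_sub_cancel]
    ring

lemma sum_grDim_of_le {n : ℕ} (hbot : M 0 = ⊥) (hUn : U ≤ M n) :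
    ∑ b ∈ Icc 1 n, grDim M U b = finrank k U := by
  have := sum_grDim M U n.zero_le
  rwa [hbot, inf_bot_eq, finrank_bot, Nat.cast_zero, sub_zero, inf_eq_left.2 hUn] at this

lemma grDim_eq_zero_of_le {j : ℕ} (hM : Monotone M) (hU : U ≤ M (j - 1)) : grDim M U j = 0 := by
  rw [grDim, inf_eq_left.2 hU, inf_eq_left.2 (hU.trans (hM (j.sub_le 1))), sub_self]

lemma grDim_eq_of_le {j : ℕ} (hM : Monotone M) (hU : M j ≤ U) :
    grDim M U j = finrank k (M j) - finrank k (M (j - 1)) := by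
  rw [grDim, inf_eq_right.2 hU, inf_eq_right.2 ((hM (j.sub_le 1)).trans hU)]

/-- `U` lies between `M 0` and `M m`, and the filtration which `M` induces on it has graded
dimensions `a 1, …, a m`. -/
def HasGrDims (M : ℕ → Submodule k V) (m : ℕ) (a : ℕ → ℕ) (U : Submodule k V) : Prop :=
  M 0 ≤ U ∧ U ≤ M m ∧ ∀ j ∈ Icc 1 m, grDim M U j = a j

lemma HasGrDims.finrank_eq {m : ℕ} {a : ℕ → ℕ} (hU : HasGrDims M m a U) :
    finrank k U = finrank k (M 0) + ∑ j ∈ Icc 1 m, a j := by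
  have hsum := sum_grDim M U m.zero_le
  rw [sum_congr rfl hU.2.2, inf_eq_left.2 hU.2.1, inf_eq_right.2 hU.1] at hsum
  push_cast [← @Nat.cast_inj ℤ]
  linarith

lemma hasGrDims_zero_iff {a : ℕ → ℕ} : HasGrDims M 0 a U ↔ U = M 0 :=
  ⟨fun hU => le_antisymm hU.2.1 hU.1, fun h => by simp [HasGrDims, h]⟩

lemma hasGrDims_succ_iff (hM : Monotone M) {m : ℕ} {a : ℕ → ℕ} :
    HasGrDims M (m + 1) a U ↔ U ≤ M (m + 1) ∧ HasGrDims M m a (U ⊓ M m) ∧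
      finrank k U = finrank k ↥(U ⊓ M m) + a (m + 1) := by
  have hgr_inf : ∀ j ∈ Icc 1 m, grDim M (U ⊓ M m) j = grDim M U j := fun j hj => by
    have hjm := (mem_Icc.1 hj).2
    rw [grDim, grDim, inf_assoc, inf_assoc, inf_eq_right.2 (hM hjm),
      inf_eq_right.2 (hM ((j.sub_le 1).trans hjm))]
  have hgr_last (hU : U ≤ M (m + 1)) :
      grDim M U (m + 1) = finrank k U - finrank k ↥(U ⊓ M m) := by
    rw [grDim, Nat.add_sub_cancel, inf_eq_left.2 hU]
  have hIcc : Icc 1 (m + 1) = insert (m + 1) (Icc 1 m) :=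
    (insert_Icc_right_eq_Icc_add_one (by omega)).symm
  rw [HasGrDims, HasGrDims, hIcc, forall_mem_insert, le_inf_iff]
  constructor
  · rintro ⟨h₀, hU, hlast, hgr⟩
    rw [hgr_last hU] at hlast
    exact ⟨hU, ⟨⟨h₀, hM m.zero_le⟩, inf_le_right, fun j hj => (hgr_inf j hj).trans (hgr j hj)⟩,
      by omega⟩
  · rintro ⟨hU, ⟨⟨h₀, -⟩, -, hgr⟩, hlast⟩
    refine ⟨h₀, hU, ?_, fun j hj => (hgr_inf j hj).symm.trans (hgr j hj)⟩
    rw [hgr_last hU]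
    omega

variable [FiniteDimensional k V]

lemma finrank_sup_eq_sub (U W : Submodule k V) :
    (finrank k ↥(U ⊔ W) : ℤ) = finrank k U + finrank k W - finrank k ↥(U ⊓ W) := by
  have := Submodule.finrank_sup_add_finrank_inf_eq U W
  omega

lemma relDim_eq_sub {U W : Submodule k V} (h : U ≤ W) :
    (relDim W U : ℤ) = finrank k W - finrank k U := by
  have := (U.comap W.subtype).finrank_quotient_add_finrank
  rw [(Submodule.comapSubtypeEquivOfLe h).finrank_eq] at this
  rw [relDim]
  omega

lemma relDim_sup_inf_eq_grDim_sub (hM : Monotone M) (hUW : U ≤ W) (j : ℕ) :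
    (relDim (W ⊓ M j) ((U ⊓ M j) ⊔ (W ⊓ M (j - 1))) : ℤ) = grDim M W j - grDim M U j := by
  have hj := hM (j.sub_le 1)
  rw [relDim_eq_sub (sup_le (inf_le_inf_right _ hUW) (inf_le_inf_left _ hj)), finrank_sup_eq_sub,
    inf_inf_inf_comm, inf_eq_left.2 hUW, inf_eq_right.2 hj, grDim, grDim]
  ring

lemma grDim_mono (hM : Monotone M) (hUW : U ≤ W) (j : ℕ) : grDim M U j ≤ grDim M W j := by
  have := relDim_sup_inf_eq_grDim_sub hM hUW j
  omega

lemma grDim_sup_inf {S : Submodule k V} (hUS : U ≤ S) (hSW : S ≤ W) (j : ℕ) :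
    grDim (fun i => U ⊔ (W ⊓ M i)) S j = grDim M S j - grDim M U j := by
  simp only [grDim]
  rw [inf_sup_inf_eq hUS hSW, inf_sup_inf_eq hUS hSW, finrank_sup_eq_sub, finrank_sup_eq_sub,
    ← inf_assoc, ← inf_assoc, inf_eq_left.2 hUS]
  ring

end GradedDimension

lemma natCard_hasGrDims {k V : Type*} [Field k] [AddCommGroup V] [Module k V]
    [FiniteDimensional k V] [Fintype k] {M : ℕ → Submodule k V} (hM : Monotone M) (a t : ℕ → ℕ)
    (m : ℕ) (hdim : ∀ j ∈ Icc 1 m, grDim M ⊤ j = (a j + t j : ℕ)) :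
    (Nat.card {S : Submodule k V // HasGrDims M m a S} : ℚ) =
      (Fintype.card k : ℚ) ^ (∑ j ∈ Icc 1 m, a j * ∑ u ∈ Icc 1 (j - 1), t u) *
        ∏ u ∈ Icc 1 m, qbinom (Fintype.card k) ((a u : ℤ) + t u) (t u) := by
  have : Finite V := Module.finite_of_finite k
  induction m with
  | zero => simp [hasGrDims_zero_iff]
  | succ m ih =>
    have hM_le : M m ≤ M (m + 1) := hM m.le_succ
    have hdim_m : ∀ j ∈ Icc 1 m, grDim M ⊤ j = (a j + t j : ℕ) := fun j hj =>
      hdim j (Icc_subset_Icc_right m.le_succ hj)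
    rw [sum_Icc_succ_top (by omega), prod_Icc_succ_top (by omega), pow_add, mul_mul_mul_comm,
      ← ih hdim_m, Nat.add_sub_cancel]
    refine natCard_eq_mul_of_natCard_fiber
      (fun S => ⟨S.1 ⊓ M m, ((hasGrDims_succ_iff hM).1 S.2).2.1⟩) _ ?_
    rintro ⟨S₀, hS₀⟩
    have hlast : finrank k (M (m + 1)) = finrank k (M m) + (a (m + 1) + t (m + 1)) := by
      have := hdim (m + 1) (by simp)
      rw [grDim, top_inf_eq, top_inf_eq, Nat.add_sub_cancel] at this
      omega
    have htotal : finrank k (M m) = finrank k S₀ + ∑ u ∈ Icc 1 m, t u := by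
      have := sum_grDim M ⊤ m.zero_le
      rw [sum_congr rfl hdim_m, top_inf_eq, top_inf_eq, ← Nat.cast_sum, sum_add_distrib] at this
      have := hS₀.finrank_eq
      omega
    rw [← natCard_subspaces_inf_eq (le_inf (hS₀.2.1.trans hM_le) hS₀.2.1)
      (by rwa [inf_eq_right.2 hM_le]) (by rwa [inf_eq_right.2 hM_le])]
    refine congrArg _ (Nat.card_congr ?_)
    refine (Equiv.subtypeEquivRight fun S => Subtype.ext_iff).trans <|
      (Equiv.subtypeSubtypeEquivSubtypeInter _ (fun S : Submodule k V => S ⊓ M m = S₀)).trans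
        (Equiv.subtypeEquivRight fun S => ?_)
    rw [hasGrDims_succ_iff hM]
    constructor
    · rintro ⟨⟨hS, -, hfin⟩, rfl⟩
      exact ⟨hS, rfl, hfin⟩
    · rintro ⟨hS, rfl, hfin⟩
      exact ⟨⟨hS, hS₀, hfin⟩, rfl⟩

lemma natCard_between {k V : Type*} [Field k] [AddCommGroup V] [Module k V]
    [FiniteDimensional k V] [Fintype k] {M : ℕ → Submodule k V} (hM : Monotone M)
    {U W : Submodule k V} (hUW : U ≤ W) {n : ℕ} (h₀ : M 0 ≤ U) (hn : W ≤ M n) (a t : ℕ → ℕ)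
    (hdim : ∀ j ∈ Icc 1 n, grDim M W j = grDim M U j + a j + t j) :
    (Nat.card {S : Submodule k V // U ≤ S ∧ S ≤ W ∧
        ∀ j ∈ Icc 1 n, grDim M S j = grDim M U j + a j} : ℚ) =
      (Fintype.card k : ℚ) ^ (∑ j ∈ Icc 1 n, a j * ∑ u ∈ Icc 1 (j - 1), t u) *
        ∏ u ∈ Icc 1 n, qbinom (Fintype.card k) ((a u : ℤ) + t u) (t u) := by
  set P : ℕ → Submodule k V := fun j => U ⊔ (W ⊓ M j)
  have hP : Monotone P := fun i j hij => sup_le_sup_left (inf_le_inf_left _ (hM hij)) _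
  have hPW (j : ℕ) : P j ≤ W := sup_le hUW inf_le_left
  have hPdim : ∀ j ∈ Icc 1 n, grDim P ⊤ j = (a j + t j : ℕ) := fun j hj => by
    have := grDim_sup_inf (M := M) hUW le_rfl j
    rw [hdim j hj, grDim_eq_of_le hP (hPW j)] at this
    rw [grDim_eq_of_le hP le_top, this]
    push_cast
    ring
  rw [← natCard_hasGrDims hP a t n hPdim]
  refine congrArg _ (Nat.card_congr (Equiv.subtypeEquivRight fun S => ?_))
  have hP₀ : P 0 = U := sup_eq_left.2 (inf_le_right.trans h₀)
  have hPn : P n = W := by simp only [P, inf_eq_left.2 hn, sup_eq_right.2 hUW]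
  rw [HasGrDims, hP₀, hPn]
  refine and_congr_right fun hUS => and_congr_right fun hSW => forall₂_congr fun j _ => ?_
  rw [grDim_sup_inf hUS hSW, sub_eq_iff_eq_add, add_comm]

section FlagSteps

variable {k V : Type*} [Field k] [AddCommGroup V] [Module k V] {Φ : V →ₗ[k] V →ₗ[k] k} {n : ℕ}

lemma perpB_anti {U W : Submodule k V} (hUW : U ≤ W) : perpB Φ W ≤ perpB Φ U :=
  LinearMap.BilinForm.orthogonal_le hUW

lemma perpB_sup (U W : Submodule k V) : perpB Φ (U ⊔ W) = perpB Φ U ⊓ perpB Φ W := by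
  refine le_antisymm (le_inf (perpB_anti le_sup_left) (perpB_anti le_sup_right)) ?_
  rintro v ⟨hU, hW⟩ u hu
  obtain ⟨x, hx, y, hy, rfl⟩ := Submodule.mem_sup.1 hu
  rw [map_add, LinearMap.add_apply, hU x hx, hW y hy, add_zero]

namespace Flags

lemma zero_eq_bot (L : Flags Φ n) : L.1 0 = ⊥ := L.2.1

lemma monotone (L : Flags Φ n) : Monotone L.1 := monotone_nat_of_le_succ L.2.2.1

lemma eq_top_of_le (L : Flags Φ n) {i : ℕ} (hi : n ≤ i) : L.1 i = ⊤ := L.2.2.2.1 i hi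

lemma sub_eq_perpB (L : Flags Φ n) {i : ℕ} (hi : i ≤ n) : L.1 (n - i) = perpB Φ (L.1 i) :=
  L.2.2.2.2 i hi

lemma sum_grDim (M : Flags Φ n) (U : Submodule k V) :
    ∑ j ∈ Icc 1 n, grDim M.1 U j = finrank k U :=
  sum_grDim_of_le M.zero_eq_bot (le_top.trans_eq (M.eq_top_of_le le_rfl).symm)

lemma ext_of_step {h : ℕ} (hh : h ≤ n) {L L' : Flags Φ n}
    (hne : ∀ i, i ≠ h → i ≠ n - h → L.1 i = L'.1 i) (hstep : L.1 h = L'.1 h) : L = L' := by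
  refine Subtype.ext (funext fun i => ?_)
  by_cases hi : i = h
  · rw [hi, hstep]
  by_cases hi' : i = n - h
  · rw [hi', L.sub_eq_perpB hh, L'.sub_eq_perpB hh, hstep]
  · exact hne i hi hi'

/-- The chain obtained from `L` by replacing `L h` by `S` and `L (n - h)` by its orthogonal
complement. -/
def replaceStep (L : Flags Φ n) (h : ℕ) (S : Submodule k V) : ℕ → Submodule k V :=
  Function.update (Function.update L.1 (n - h) (perpB Φ S)) h S

lemma replaceStep_self (L : Flags Φ n) (h : ℕ) (S : Submodule k V) : L.replaceStep h S h = S :=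
  Function.update_self ..

lemma replaceStep_sub (L : Flags Φ n) {h : ℕ} (hn : 2 * h < n) (S : Submodule k V) :
    L.replaceStep h S (n - h) = perpB Φ S := by
  rw [replaceStep, Function.update_of_ne (by omega), Function.update_self]

lemma replaceStep_of_ne (L : Flags Φ n) {h i : ℕ} (S : Submodule k V) (hi : i ≠ h)
    (hi' : i ≠ n - h) : L.replaceStep h S i = L.1 i := by
  rw [replaceStep, Function.update_of_ne hi, Function.update_of_ne hi']

lemma replaceStep_le_succ (L : Flags Φ n) {h : ℕ} (hn : 2 * h < n) {S : Submodule k V}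
    (hS : L.1 (h - 1) ≤ S) (hS' : S ≤ L.1 h) (hperp : L.1 (n - h) ≤ perpB Φ S)
    (hperp' : perpB Φ S ≤ L.1 (n - h + 1)) (i : ℕ) :
    L.replaceStep h S i ≤ L.replaceStep h S (i + 1) := by
  rcases eq_or_ne i h with rfl | hi
  · have hL : L.1 i ≤ L.1 (i + 1) := L.monotone i.le_succ
    rw [replaceStep_self]
    rcases eq_or_ne (i + 1) (n - i) with hi' | hi'
    · rw [hi', L.replaceStep_sub hn]
      exact hS'.trans ((hL.trans_eq (congrArg L.1 hi')).trans hperp)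
    · rw [L.replaceStep_of_ne S (by omega) hi']
      exact hS'.trans hL
  rcases eq_or_ne i (n - h) with rfl | hi'
  · rwa [L.replaceStep_sub hn, L.replaceStep_of_ne S (by omega) (by omega)]
  rw [L.replaceStep_of_ne S hi hi']
  rcases eq_or_ne (i + 1) h with rfl | hi₁
  · rwa [replaceStep_self]
  rcases eq_or_ne (i + 1) (n - h) with hi₁' | hi₁'
  · rw [hi₁', L.replaceStep_sub hn]
    exact (L.monotone (by omega)).trans hperp
  · rw [L.replaceStep_of_ne S hi₁ hi₁']
    exact L.monotone i.le_succ

variable [FiniteDimensional k V]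

lemma grDim_perpB (hnondeg : Φ.Nondegenerate) (M : Flags Φ n) (U : Submodule k V) {j : ℕ}
    (hj : j ∈ Icc 1 n) :
    grDim M.1 (perpB Φ U) (n + 1 - j) = grDim M.1 ⊤ j - grDim M.1 U j := by
  have finrank_perpB_inf {i : ℕ} (hi : i ≤ n) : (finrank k ↥(perpB Φ U ⊓ M.1 (n - i)) : ℤ) =
      finrank k V - (finrank k U + finrank k (M.1 i) - finrank k ↥(U ⊓ M.1 i)) := by
    have hperp : finrank k ↥(perpB Φ (U ⊔ M.1 i)) = finrank k V - finrank k ↥(U ⊔ M.1 i) :=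
      LinearMap.BilinForm.finrank_orthogonal hnondeg _
    have hle := Submodule.finrank_le (U ⊔ M.1 i)
    rw [M.sub_eq_perpB hi, ← perpB_sup, ← finrank_sup_eq_sub]
    omega
  obtain ⟨hj1, hjn⟩ := mem_Icc.1 hj
  rw [grDim, grDim, grDim, show n + 1 - j = n - (j - 1) by omega,
    show n - (j - 1) - 1 = n - j by omega, finrank_perpB_inf hjn, finrank_perpB_inf (by omega),
    top_inf_eq, top_inf_eq]
  ring

lemma isFlag_replaceStep (hrefl : Φ.IsRefl) (hnondeg : Φ.Nondegenerate) (L : Flags Φ n) {h : ℕ}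
    (hh : 1 ≤ h) (hn : 2 * h < n) {S : Submodule k V} (hS : L.1 (h - 1) ≤ S) (hS' : S ≤ L.1 h) :
    IsFlag Φ n (L.replaceStep h S) := by
  have hperp : L.1 (n - h) ≤ perpB Φ S := by
    rw [L.sub_eq_perpB (by omega)]
    exact perpB_anti hS'
  have hperp' : perpB Φ S ≤ L.1 (n - h + 1) := by
    rw [show n - h + 1 = n - (h - 1) by omega, L.sub_eq_perpB (by omega)]
    exact perpB_anti hS
  refine ⟨?_, fun i => ?_, fun i hi => ?_, fun i hi => ?_⟩
  · rw [L.replaceStep_of_ne S (by omega) (by omega), L.zero_eq_bot]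
  · exact L.replaceStep_le_succ hn hS hS' hperp hperp' i
  · rw [L.replaceStep_of_ne S (by omega) (by omega), L.eq_top_of_le hi]
  · rcases eq_or_ne i h with rfl | hih
    · rw [L.replaceStep_sub hn, replaceStep_self]
    rcases eq_or_ne i (n - h) with rfl | hinh
    · rw [L.replaceStep_sub hn, Nat.sub_sub_self (by omega), replaceStep_self]
      exact (LinearMap.BilinForm.orthogonal_orthogonal hnondeg hrefl S).symm
    · rw [L.replaceStep_of_ne S hih hinh, L.replaceStep_of_ne S (by omega) (by omega),
        L.sub_eq_perpB hi]

end Flags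

end FlagSteps

section Position

variable {k V : Type*} [Field k] [AddCommGroup V] [Module k V] {Φ : V →ₗ[k] V →ₗ[k] k} {n : ℕ}

/-- The `(i, j)` entry of the relative position of two chains of subspaces. -/
def relPos (L M : ℕ → Submodule k V) (i j : ℕ) : ℤ :=
  grDim M (L i) j - grDim M (L (i - 1)) j

/-- The pair of flags `(L, M)` lies in the orbit `O_A`. -/
def HasPosition (A : ℕ → ℕ → ℤ) (L M : Flags Φ n) : Prop :=
  ∀ i ∈ Icc 1 n, ∀ j ∈ Icc 1 n, relPos L.1 M.1 i j = A i j

lemma sum_relPos (L M : ℕ → Submodule k V) {i j : ℕ} (hij : i ≤ j) (b : ℕ) :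
    ∑ a ∈ Icc (i + 1) j, relPos L M a b = grDim M (L j) b - grDim M (L i) b := by
  induction j, hij using Nat.le_induction with
  | base => simp
  | succ j hij ih =>
    rw [sum_Icc_succ_top (by omega), ih, relPos, Nat.add_sub_cancel]
    ring

lemma relPos_self_of_ne {L : ℕ → Submodule k V} (hL : Monotone L) {i j : ℕ} (hij : i ≠ j) :
    relPos L L i j = 0 := by
  rw [relPos]
  rcases hij.lt_or_gt with h | h
  · rw [grDim_eq_zero_of_le hL (hL (by omega)), grDim_eq_zero_of_le hL (hL (by omega)), sub_self]
  · rw [grDim_eq_of_le hL (hL (by omega)), grDim_eq_of_le hL (hL (by omega)), sub_self]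

lemma HasPosition.roM_eq {A : ℕ → ℕ → ℤ} {L M : Flags Φ n} (hpos : HasPosition A L M) {i : ℕ}
    (hi : i ∈ Icc 1 n) : roM n A i = finrank k (L.1 i) - finrank k (L.1 (i - 1)) := by
  calc roM n A i = ∑ j ∈ Icc 1 n, (grDim M.1 (L.1 i) j - grDim M.1 (L.1 (i - 1)) j) :=
        sum_congr rfl fun j hj => (hpos i hi j hj).symm
    _ = finrank k (L.1 i) - finrank k (L.1 (i - 1)) := by
      rw [sum_sub_distrib, M.sum_grDim, M.sum_grDim]

lemma coM_relPos (L M : Flags Φ n) (j : ℕ) :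
    coM n (relPos L.1 M.1) j = finrank k (M.1 j) - finrank k (M.1 (j - 1)) := by
  rw [coM, sum_relPos _ _ n.zero_le, L.zero_eq_bot, L.eq_top_of_le le_rfl,
    grDim_eq_of_le M.monotone le_top, grDim_eq_zero_of_le M.monotone bot_le, sub_zero]

variable [FiniteDimensional k V]

lemma relPos_nonneg (L M : Flags Φ n) (i j : ℕ) : 0 ≤ relPos L.1 M.1 i j :=
  sub_nonneg.2 (grDim_mono M.monotone (L.monotone (i.sub_le 1)) j)

lemma eMat_eq (A : ℕ → ℕ → ℤ) (LL : Flags Φ n × Flags Φ n) :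
    eMat Φ n A LL = if HasPosition A LL.1 LL.2 then 1 else 0 := by
  rw [eMat]
  congr 1
  refine propext (forall₄_congr fun i _ j _ => ?_)
  rw [relDim_sup_inf_eq_grDim_sub LL.2.monotone (LL.1.monotone (i.sub_le 1)), relPos]

lemma le_of_relPos_eq_zero (L M : Flags Φ n) {i : ℕ} (hi : i ≤ n)
    (hzero : ∀ a ∈ Icc 1 i, ∀ b ∈ Icc (i + 1) n, relPos L.1 M.1 a b = 0) : L.1 i ≤ M.1 i := by
  have hgr : ∀ b ∈ Icc (i + 1) n, grDim M.1 (L.1 i) b = 0 := fun b hb => by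
    have hsum := sum_relPos L.1 M.1 i.zero_le b
    rw [zero_add, sum_eq_zero fun a ha => hzero a ha b hb, L.zero_eq_bot,
      grDim_eq_zero_of_le M.monotone bot_le] at hsum
    omega
  have hsum := sum_grDim M.1 (L.1 i) hi
  rw [sum_eq_zero hgr, M.eq_top_of_le le_rfl, inf_top_eq] at hsum
  exact inf_eq_left.1 (Submodule.eq_of_le_of_finrank_eq inf_le_left (by omega))

lemma ge_of_relPos_eq_zero (L M : Flags Φ n) {i : ℕ} (hi : i ≤ n)
    (hzero : ∀ a ∈ Icc (i + 1) n, ∀ b ∈ Icc 1 i, relPos L.1 M.1 a b = 0) : M.1 i ≤ L.1 i := by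
  have hgr : ∀ b ∈ Icc 1 i, grDim M.1 (L.1 i) b = grDim M.1 ⊤ b := fun b hb => by
    have hsum := sum_relPos L.1 M.1 hi b
    rw [sum_eq_zero fun a ha => hzero a ha b hb, L.eq_top_of_le le_rfl] at hsum
    omega
  have hsum := sum_grDim M.1 (L.1 i) i.zero_le
  have hsum_top := sum_grDim M.1 ⊤ i.zero_le
  rw [zero_add, M.zero_eq_bot, inf_bot_eq, finrank_bot] at hsum hsum_top
  rw [sum_congr rfl hgr, hsum_top, top_inf_eq] at hsum
  exact inf_eq_right.1 (Submodule.eq_of_le_of_finrank_eq inf_le_right (by omega))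

end Position

section ShiftRows

/-- The matrix `A + ∑ u, t u (E^θ_{h,u} - E^θ_{h+1,u})`. -/
def shiftRows (n h : ℕ) (t : ℕ → ℕ) (A : ℕ → ℕ → ℤ) : ℕ → ℕ → ℤ := fun a b =>
  A a b + ∑ u ∈ Icc 1 n, (t u : ℤ) * (Eth n h u a b - Eth n (h + 1) u a b)

lemma sum_mul_Eth {n i : ℕ} (t : ℕ → ℕ) (a : ℕ) {b : ℕ} (hb : b ∈ Icc 1 n) :
    ∑ u ∈ Icc 1 n, (t u : ℤ) * Eth n i u a b =
      (if a = i then (t b : ℤ) else 0) + if a = n + 1 - i then (t (n + 1 - b) : ℤ) else 0 := by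
  have hb' : n + 1 - b ∈ Icc 1 n := by
    rw [mem_Icc] at *
    omega
  have hreflect : ∀ u ∈ Icc 1 n, (b = n + 1 - u ↔ n + 1 - b = u) := fun u hu => by
    rw [mem_Icc] at *
    omega
  simp only [Eth, mul_add, sum_add_distrib, ite_and, mul_ite, mul_one, mul_zero]
  congr 1
  · split_ifs <;> simp [hb]
  · split_ifs
    · rw [sum_congr rfl fun u hu => if_congr (hreflect u hu) rfl rfl, sum_ite_eq, if_pos hb']
    · exact sum_const_zero

lemma shiftRows_apply {n h : ℕ} (t : ℕ → ℕ) (A : ℕ → ℕ → ℤ) (i : ℕ) {j : ℕ} (hj : j ∈ Icc 1 n) :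
    shiftRows n h t A i j = A i j
      + ((if i = h then (t j : ℤ) else 0) + if i = n + 1 - h then (t (n + 1 - j) : ℤ) else 0)
      - ((if i = h + 1 then (t j : ℤ) else 0) + if i = n - h then (t (n + 1 - j) : ℤ) else 0) := by
  simp only [shiftRows, mul_sub, sum_sub_distrib, sum_mul_Eth t i hj, Nat.add_sub_add_right]
  ring

lemma shiftRows_apply_self {n h : ℕ} (hn : 2 * h < n) (t : ℕ → ℕ) (A : ℕ → ℕ → ℤ) {j : ℕ}
    (hj : j ∈ Icc 1 n) : shiftRows n h t A h j = A h j + t j := by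
  rw [shiftRows_apply t A h hj, if_pos rfl, if_neg (by omega), if_neg (by omega),
    if_neg (by omega)]
  ring

end ShiftRows

section ShrinksAt

variable {k V : Type*} [Field k] [AddCommGroup V] [Module k V] {Φ : V →ₗ[k] V →ₗ[k] k} {n : ℕ}

/-- The flag `L'` arises from `L` by shrinking `L h` by `R` dimensions, and hence enlarging
`L (n - h)`, while keeping the other subspaces. -/
structure ShrinksAt (h R : ℕ) (L L' : Flags Φ n) : Prop where
  eq_of_ne : ∀ i, i ≠ h → i ≠ n - h → L'.1 i = L.1 i
  le : L'.1 h ≤ L.1 h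
  finrank_eq : finrank k (L.1 h) = finrank k (L'.1 h) + R

namespace ShrinksAt

variable {h R : ℕ} {L L' : Flags Φ n}

lemma le_of_ne (hLL' : ShrinksAt h R L L') (hn : 2 * h < n) {i : ℕ} (hi : i ≠ h) :
    L.1 i ≤ L'.1 i := by
  rcases eq_or_ne i (n - h) with rfl | hi'
  · rw [L.sub_eq_perpB (by omega), L'.sub_eq_perpB (by omega)]
    exact perpB_anti hLL'.le
  · exact (hLL'.eq_of_ne i hi hi').ge

lemma grDim_self (hLL' : ShrinksAt h R L L') (hn : 2 * h < n) (j : ℕ) :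
    grDim L'.1 (L.1 h) j = grDim L'.1 (L'.1 h) j + (if j = h + 1 then R else 0 : ℕ) := by
  have hle : L.1 h ≤ L'.1 (h + 1) :=
    (L.monotone h.le_succ).trans (hLL'.le_of_ne hn (by omega))
  have hL' := L'.monotone
  rcases lt_trichotomy j (h + 1) with hj | rfl | hj
  · have hjh : L'.1 j ≤ L'.1 h := hL' (by omega)
    rw [grDim_eq_of_le hL' (hjh.trans hLL'.le), grDim_eq_of_le hL' hjh, if_neg hj.ne,
      Nat.cast_zero, add_zero]
  · rw [grDim_eq_zero_of_le (U := L'.1 h) (j := h + 1) hL' le_rfl, if_pos rfl, grDim,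
      Nat.add_sub_cancel, inf_eq_left.2 hle, inf_eq_right.2 hLL'.le, hLL'.finrank_eq]
    push_cast
    ring
  · rw [grDim_eq_zero_of_le hL' (hle.trans (hL' (by omega))),
      grDim_eq_zero_of_le hL' (hL' (by omega)), if_neg hj.ne', Nat.cast_zero, add_zero]

variable [FiniteDimensional k V]

lemma grDim_eq (hnondeg : Φ.Nondegenerate) (hLL' : ShrinksAt h R L L') (hn : 2 * h < n)
    {M : Flags Φ n} {t : ℕ → ℕ}
    (ht : ∀ j ∈ Icc 1 n, grDim M.1 (L.1 h) j = grDim M.1 (L'.1 h) j + t j) (i : ℕ) {j : ℕ}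
    (hj : j ∈ Icc 1 n) :
    grDim M.1 (L.1 i) j = grDim M.1 (L'.1 i) j + (if i = h then (t j : ℤ) else 0)
      - if i = n - h then (t (n + 1 - j) : ℤ) else 0 := by
  rcases eq_or_ne i h with rfl | hi
  · rw [if_pos rfl, if_neg (by omega), ht j hj, sub_zero]
  rcases eq_or_ne i (n - h) with rfl | hi'
  · have hj' : n + 1 - j ∈ Icc 1 n := by
      rw [mem_Icc] at *
      omega
    have hL := Flags.grDim_perpB hnondeg M (L.1 h) hj'
    have hL' := Flags.grDim_perpB hnondeg M (L'.1 h) hj'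
    rw [Nat.sub_sub_self ((mem_Icc.1 hj).2.trans n.le_succ)] at hL hL'
    rw [if_neg hi, if_pos rfl, L.sub_eq_perpB (by omega), L'.sub_eq_perpB (by omega), hL, hL',
      ht _ hj']
    ring
  · rw [if_neg hi, if_neg hi', hLL'.eq_of_ne i hi hi', add_zero, sub_zero]

lemma hasPosition_shiftRows_iff (hnondeg : Φ.Nondegenerate) (hLL' : ShrinksAt h R L L')
    (hn : 2 * h < n) {M : Flags Φ n} {t : ℕ → ℕ} {A : ℕ → ℕ → ℤ}
    (ht : ∀ j ∈ Icc 1 n, grDim M.1 (L.1 h) j = grDim M.1 (L'.1 h) j + t j) :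
    HasPosition (shiftRows n h t A) L M ↔ HasPosition A L' M := by
  refine forall₄_congr fun i hi j hj => ?_
  have hi₁ := (mem_Icc.1 hi).1
  rw [relPos, relPos, shiftRows_apply t A i hj, hLL'.grDim_eq hnondeg hn ht i hj,
    hLL'.grDim_eq hnondeg hn ht (i - 1) hj,
    if_congr (show i - 1 = h ↔ i = h + 1 by omega) rfl rfl,
    if_congr (show i - 1 = n - h ↔ i = n + 1 - h by omega) rfl rfl]
  constructor <;> intro _ <;> linarith

end ShrinksAt

section AlmostDiagonal

variable [FiniteDimensional k V] {h R : ℕ} {L L' : Flags Φ n} {B : ℕ → ℕ → ℤ}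

lemma HasPosition.shrinksAt (hh : 1 ≤ h) (hn : 2 * h < n)
    (hB : ∀ i ∈ Icc 1 n, ∀ j ∈ Icc 1 n, i ≠ j → B i j = R * Eth n h (h + 1) i j)
    (hpos : HasPosition B L L') : ShrinksAt h R L L' := by
  have hzero {a b : ℕ} (ha : a ∈ Icc 1 n) (hb : b ∈ Icc 1 n) (hab : a ≠ b)
      (hne : ¬(a = h ∧ b = h + 1)) (hne' : ¬(a = n + 1 - h ∧ b = n - h)) :
      relPos L.1 L'.1 a b = 0 := by
    rw [hpos a ha b hb, hB a ha b hb hab, Eth, if_neg hne, if_neg (by omega), add_zero, mul_zero]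
  have hle {i : ℕ} (hi : i ≤ n) (hih : i ≠ h) : L.1 i ≤ L'.1 i :=
    le_of_relPos_eq_zero L L' hi fun a ha b hb => by
      rw [mem_Icc] at ha hb
      exact hzero (mem_Icc.2 (by omega)) (mem_Icc.2 (by omega)) (by omega) (by omega) (by omega)
  have hge {i : ℕ} (hi : i ≤ n) (hih : i ≠ n - h) : L'.1 i ≤ L.1 i :=
    ge_of_relPos_eq_zero L L' hi fun a ha b hb => by
      rw [mem_Icc] at ha hb
      exact hzero (mem_Icc.2 (by omega)) (mem_Icc.2 (by omega)) (by omega) (by omega) (by omega)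
  have hle_h : L'.1 h ≤ L.1 h := hge (by omega) (by omega)
  refine ⟨fun i hi hi' => ?_, hle_h, ?_⟩
  · rcases le_total i n with hin | hin
    · exact le_antisymm (hge hin hi') (hle hin hi)
    · rw [L.eq_top_of_le hin, L'.eq_top_of_le hin]
  have hR : relPos L.1 L'.1 h (h + 1) = R := by
    rw [hpos h (mem_Icc.2 (by omega)) _ (mem_Icc.2 (by omega)),
      hB h (mem_Icc.2 (by omega)) _ (mem_Icc.2 (by omega)) (by omega), Eth,
      if_pos ⟨rfl, rfl⟩, if_neg (by omega), add_zero, mul_one]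
  rw [relPos, grDim_eq_zero_of_le (j := h + 1) L'.monotone
      ((hle (by omega) (by omega)).trans (L'.monotone (h.sub_le 1))), grDim, Nat.add_sub_cancel,
    inf_eq_right.2 hle_h,
    inf_eq_left.2 ((L.monotone h.le_succ).trans (hle (by omega) (by omega)))] at hR
  omega

lemma ShrinksAt.hasPosition (hnondeg : Φ.Nondegenerate) (hn : 2 * h < n)
    (hB : ∀ i ∈ Icc 1 n, ∀ j ∈ Icc 1 n, i ≠ j → B i j = R * Eth n h (h + 1) i j)
    (hco : ∀ j ∈ Icc 1 n, coM n B j = finrank k (L'.1 j) - finrank k (L'.1 (j - 1)))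
    (hLL' : ShrinksAt h R L L') : HasPosition B L L' := by
  have hoff : ∀ i ∈ Icc 1 n, ∀ j ∈ Icc 1 n, i ≠ j → relPos L.1 L'.1 i j = B i j := by
    intro i hi j hj hij
    have hEth : Eth n (h + 1) (h + 1) i j = 0 := by
      rw [Eth, if_neg (by omega), if_neg (by omega), add_zero]
    have hself : HasPosition (relPos L'.1 L'.1) L' L' := fun _ _ _ _ => rfl
    rw [(hLL'.hasPosition_shiftRows_iff hnondeg hn fun j _ => hLL'.grDim_self hn j).2 hself
      i hi j hj, shiftRows, relPos_self_of_ne L'.monotone hij, hB i hi j hj hij, zero_add,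
      sum_eq_single_of_mem (h + 1) (mem_Icc.2 (by omega)) (fun u _ hu => by simp [hu]), if_pos rfl,
      hEth, sub_zero]
  intro i hi j hj
  rcases ne_or_eq i j with hij | rfl
  · exact hoff i hi j hj hij
  have hcol := coM_relPos L L' i
  rw [← hco i hi, coM, coM, ← add_sum_erase _ _ hi, ← add_sum_erase _ _ hi,
    sum_congr rfl fun a ha => hoff a (mem_of_mem_erase ha) i hi (ne_of_mem_erase ha)] at hcol
  exact add_right_cancel hcol

lemma hasPosition_iff_shrinksAt (hnondeg : Φ.Nondegenerate) (hh : 1 ≤ h) (hn : 2 * h < n)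
    (hB : ∀ i ∈ Icc 1 n, ∀ j ∈ Icc 1 n, i ≠ j → B i j = R * Eth n h (h + 1) i j)
    (hco : ∀ j ∈ Icc 1 n, coM n B j = finrank k (L'.1 j) - finrank k (L'.1 (j - 1))) :
    HasPosition B L L' ↔ ShrinksAt h R L L' :=
  ⟨HasPosition.shrinksAt hh hn hB, ShrinksAt.hasPosition hnondeg hn hB hco⟩

end AlmostDiagonal

end ShrinksAt

section MiddleFlags

variable {k V : Type*} [Field k] [AddCommGroup V] [Module k V]
  {Φ : V →ₗ[k] V →ₗ[k] k} {n h R : ℕ} {A : ℕ → ℕ → ℤ} {t : ℕ → ℕ} {L L' M : Flags Φ n}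

lemma HasPosition.grDim_row {i j : ℕ} (hpos : HasPosition A L M) (hi : i ∈ Icc 1 n)
    (hj : j ∈ Icc 1 n) : grDim M.1 (L.1 i) j = grDim M.1 (L.1 (i - 1)) j + A i j :=
  eq_add_of_sub_eq' (hpos i hi j hj)

lemma HasPosition.grDim_row_shiftRows (hh : 1 ≤ h) (hn : 2 * h < n)
    (hpos : HasPosition (shiftRows n h t A) L M) {j : ℕ} (hj : j ∈ Icc 1 n) :
    grDim M.1 (L.1 h) j = grDim M.1 (L.1 (h - 1)) j + A h j + t j := by
  rw [hpos.grDim_row (mem_Icc.2 (by omega)) hj, shiftRows_apply_self hn t A hj, add_assoc]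

variable [FiniteDimensional k V]

lemma ShrinksAt.hasPosition_iff_grDim (hnondeg : Φ.Nondegenerate) (hh : 1 ≤ h) (hn : 2 * h < n)
    (hpos : HasPosition (shiftRows n h t A) L M) (hLL' : ShrinksAt h R L L') :
    HasPosition A L' M ↔
      ∀ j ∈ Icc 1 n, grDim M.1 (L'.1 h) j = grDim M.1 (L.1 (h - 1)) j + A h j := by
  constructor
  · intro hpos' j hj
    rw [hpos'.grDim_row (mem_Icc.2 (by omega)) hj, hLL'.eq_of_ne _ (by omega) (by omega)]
  · intro hgr
    exact (hLL'.hasPosition_shiftRows_iff hnondeg hn fun j hj => by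
      rw [hpos.grDim_row_shiftRows hh hn hj, hgr j hj]).1 hpos

lemma ShrinksAt.exists_of_between (hrefl : Φ.IsRefl) (hnondeg : Φ.Nondegenerate) (hh : 1 ≤ h)
    (hn : 2 * h < n) {S : Submodule k V} (hS : L.1 (h - 1) ≤ S) (hS' : S ≤ L.1 h)
    (hfin : finrank k (L.1 h) = finrank k S + R) : ∃ L', ShrinksAt h R L L' ∧ L'.1 h = S :=
  ⟨⟨L.replaceStep h S, L.isFlag_replaceStep hrefl hnondeg hh hn hS hS'⟩,
    ⟨fun _ => L.replaceStep_of_ne S, (L.replaceStep_self h S).trans_le hS',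
      hfin.trans
        (congrArg (fun U : Submodule k V => finrank k U + R) (L.replaceStep_self h S).symm)⟩,
    L.replaceStep_self h S⟩

lemma natCard_shrinksAt_eq_natCard_between (hrefl : Φ.IsRefl) (hnondeg : Φ.Nondegenerate)
    (hh : 1 ≤ h) (hn : 2 * h < n) (ht : ∑ u ∈ Icc 1 n, t u = R)
    (hpos : HasPosition (shiftRows n h t A) L M) :
    Nat.card {L' // ShrinksAt h R L L' ∧ HasPosition A L' M} =
      Nat.card {S : Submodule k V // L.1 (h - 1) ≤ S ∧ S ≤ L.1 h ∧
        ∀ j ∈ Icc 1 n, grDim M.1 S j = grDim M.1 (L.1 (h - 1)) j + A h j} := by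
  have hprev {L' : Flags Φ n} (hLL' : ShrinksAt h R L L') : L.1 (h - 1) ≤ L'.1 h :=
    (hLL'.eq_of_ne _ (by omega) (by omega)).symm.trans_le (L'.monotone (h.sub_le 1))
  refine Nat.card_eq_of_bijective (fun L' => ⟨L'.1.1 h, hprev L'.2.1, L'.2.1.le,
    (L'.2.1.hasPosition_iff_grDim hnondeg hh hn hpos).1 L'.2.2⟩) ⟨fun L₁ L₂ hstep => ?_, ?_⟩
  · exact Subtype.ext <| Flags.ext_of_step (by omega)
      (fun i hi hi' => (L₁.2.1.eq_of_ne i hi hi').trans (L₂.2.1.eq_of_ne i hi hi').symm)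
      (congrArg Subtype.val hstep)
  · rintro ⟨S, hS, hS', hgr⟩
    have hfin : (finrank k (L.1 h) : ℤ) = finrank k S + R := by
      rw [← M.sum_grDim, ← M.sum_grDim, ← ht, Nat.cast_sum, ← sum_add_distrib]
      exact sum_congr rfl fun j hj => by rw [hpos.grDim_row_shiftRows hh hn hj, hgr j hj]
    obtain ⟨L', hLL', rfl⟩ :=
      ShrinksAt.exists_of_between (R := R) hrefl hnondeg hh hn hS hS' (by omega)
    exact ⟨⟨L', hLL', (hLL'.hasPosition_iff_grDim hnondeg hh hn hpos).2 hgr⟩, rfl⟩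

lemma natCard_shrinksAt [Fintype k] (hrefl : Φ.IsRefl) (hnondeg : Φ.Nondegenerate) (hh : 1 ≤ h)
    (hn : 2 * h < n) (hA : ∀ j ∈ Icc 1 n, 0 ≤ A h j) (ht : ∑ u ∈ Icc 1 n, t u = R)
    (hpos : HasPosition (shiftRows n h t A) L M) :
    (Nat.card {L' // ShrinksAt h R L L' ∧ HasPosition A L' M} : ℚ) =
      (Fintype.card k : ℚ) ^ (∑ j ∈ Icc 1 n, ∑ u ∈ Icc 1 n, if u < j then A h j * t u else 0) *
        ∏ u ∈ Icc 1 n, qbinom (Fintype.card k) (A h u + t u) (t u) := by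
  have htoNat : ∀ j ∈ Icc 1 n, ((A h j).toNat : ℤ) = A h j := fun j hj =>
    Int.toNat_of_nonneg (hA j hj)
  have hcount := natCard_between M.monotone (L.monotone (h.sub_le 1)) (n := n)
    (M.zero_eq_bot.trans_le bot_le) (le_top.trans_eq (M.eq_top_of_le le_rfl).symm)
    (fun j => (A h j).toNat) t fun j hj => by
      rw [hpos.grDim_row_shiftRows hh hn hj, htoNat j hj]
  have hexp : ((∑ j ∈ Icc 1 n, (A h j).toNat * ∑ u ∈ Icc 1 (j - 1), t u : ℕ) : ℤ) =
      ∑ j ∈ Icc 1 n, ∑ u ∈ Icc 1 n, if u < j then A h j * t u else 0 := by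
    push_cast
    refine sum_congr rfl fun j hj => ?_
    have hfilter : {u ∈ Icc 1 n | u < j} = Icc 1 (j - 1) := by
      ext u
      simp only [mem_filter, mem_Icc] at *
      omega
    rw [← sum_filter, hfilter, ← mul_sum, htoNat j hj]
  rw [natCard_shrinksAt_eq_natCard_between hrefl hnondeg hh hn ht hpos, ← hexp, zpow_natCast]
  simpa +contextual only [htoNat] using hcount

end MiddleFlags

section Convolution

variable {k V : Type*} [Field k] [AddCommGroup V] [Module k V]
  {Φ : V →ₗ[k] V →ₗ[k] k} {n h R : ℕ} {A : ℕ → ℕ → ℤ} {t t' : ℕ → ℕ} {L L' M : Flags Φ n}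

lemma HasPosition.shift_unique (hh : 1 ≤ h) (hn : 2 * h < n)
    (hpos : HasPosition (shiftRows n h t A) L M) (hpos' : HasPosition (shiftRows n h t' A) L M)
    (ht : ∀ u, t u ≠ 0 → u ∈ Icc 1 n) (ht' : ∀ u, t' u ≠ 0 → u ∈ Icc 1 n) : t = t' := by
  funext u
  by_cases hu : u ∈ Icc 1 n
  · have := hpos.grDim_row_shiftRows hh hn hu
    have := hpos'.grDim_row_shiftRows hh hn hu
    omega
  · rw [of_not_not (mt (ht u) hu), of_not_not (mt (ht' u) hu)]

variable [FiniteDimensional k V]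

lemma HasPosition.shiftRows_nonneg {i j : ℕ} (hpos : HasPosition A L M) (hi : i ∈ Icc 1 n)
    (hj : j ∈ Icc 1 n) : 0 ≤ A i j :=
  (relPos_nonneg L M i j).trans_eq (hpos i hi j hj)

lemma HasPosition.le_of_shiftRows (hn : 2 * h + 1 < n)
    (hpos : HasPosition (shiftRows n h t A) L M) {u : ℕ} (hu : u ∈ Icc 1 n) :
    (t u : ℤ) ≤ A (h + 1) u := by
  have := hpos.shiftRows_nonneg (i := h + 1) (mem_Icc.2 (by omega)) hu
  rw [shiftRows_apply t A _ hu, if_neg (by omega), if_neg (by omega), if_pos rfl] at this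
  split_ifs at this <;> omega

lemma HasPosition.add_le_of_shiftRows (hh : 1 ≤ h) (hn : 2 * h + 1 = n)
    (hpos : HasPosition (shiftRows n h t A) L M) {u : ℕ} (hu : u ∈ Icc 1 n) :
    (t u : ℤ) + t (n + 1 - u) ≤ A (h + 1) u := by
  have := hpos.shiftRows_nonneg (i := h + 1) (mem_Icc.2 (by omega)) hu
  rw [shiftRows_apply t A _ hu, if_neg (by omega), if_neg (by omega), if_pos rfl,
    if_pos (by omega)] at this
  omega

lemma ShrinksAt.exists_hasPosition_shiftRows (hnondeg : Φ.Nondegenerate) (hn : 2 * h < n)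
    (hLL' : ShrinksAt h R L L') (hpos : HasPosition A L' M) :
    ∃ t : ℕ → ℕ, (∀ u, t u ≠ 0 → u ∈ Icc 1 n) ∧ ∑ u ∈ Icc 1 n, t u = R ∧
      HasPosition (shiftRows n h t A) L M := by
  choose drop hdrop using fun j => Int.le.dest (grDim_mono M.monotone hLL'.le j)
  set t : ℕ → ℕ := fun j => if j ∈ Icc 1 n then drop j else 0
  have ht : ∀ j ∈ Icc 1 n, grDim M.1 (L.1 h) j = grDim M.1 (L'.1 h) j + t j := fun j hj => by
    rw [← hdrop j, show t j = drop j from if_pos hj]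
  refine ⟨t, fun u hu => by_contra fun hu' => hu (if_neg hu'), ?_,
    (hLL'.hasPosition_shiftRows_iff hnondeg hn ht).2 hpos⟩
  have hsum : (finrank k (L.1 h) : ℤ) = finrank k (L'.1 h) + ∑ u ∈ Icc 1 n, (t u : ℤ) := by
    rw [← M.sum_grDim, ← M.sum_grDim, ← sum_add_distrib]
    exact sum_congr rfl ht
  rw [hLL'.finrank_eq] at hsum
  push_cast [← @Nat.cast_inj ℤ] at hsum ⊢
  linarith

lemma finsum_ite_one_eq_natCard {α : Type*} (P : α → Prop) [DecidablePred P] :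
    ∑ᶠ x, (if P x then (1 : ℚ) else 0) = Nat.card {x // P x} := by
  calc ∑ᶠ x, (if P x then (1 : ℚ) else 0)
      = ∑ᶠ x, Nat.castAddMonoidHom ℚ (if P x then 1 else 0) := by simp
    _ = Nat.castAddMonoidHom ℚ (∑ᶠ x ∈ {x | P x}, 1) := by
      rw [← AddMonoidHom.map_finsum_of_injective _ Nat.cast_injective]
      simp only [finsum_eq_if, Set.mem_ofPred_eq]
    _ = Nat.card {x // P x} := by rw [finsum_one]; rfl

lemma conv_eMat_eq_natCard (A B : ℕ → ℕ → ℤ) (LL : Flags Φ n × Flags Φ n) :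
    conv Φ n (eMat Φ n B) (eMat Φ n A) LL =
      Nat.card {L' // HasPosition B LL.1 L' ∧ HasPosition A L' LL.2} := by
  rw [← finsum_ite_one_eq_natCard, conv]
  refine finsum_congr fun L' => ?_
  rw [eMat_eq, eMat_eq, ite_zero_mul_ite_zero, one_mul]

end Convolution

end FlagC

theorem statement1_general {k V : Type*} [Field k] [Fintype k] [AddCommGroup V] [Module k V]
    [FiniteDimensional k V] {Φ : V →ₗ[k] V →ₗ[k] k} (hrefl : Φ.IsRefl)
    (hnondeg : Φ.Nondegenerate) {n h R : ℕ} (hh : 1 ≤ h) (hn : 2 * h < n) {A B : ℕ → ℕ → ℤ}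
    (hA : ∀ j ∈ Finset.Icc 1 n, 0 ≤ A h j)
    (hroco : ∀ i ∈ Finset.Icc 1 n, roM n A i = coM n B i)
    (hBdiag : ∀ i ∈ Finset.Icc 1 n, ∀ j ∈ Finset.Icc 1 n, i ≠ j →
      B i j = (R : ℤ) * Eth n h (h + 1) i j) (LL : Flags Φ n × Flags Φ n) :
    conv Φ n (eMat Φ n B) (eMat Φ n A) LL =
      ∑ᶠ t : ℕ → ℕ,
        if (∀ u, t u ≠ 0 → u ∈ Finset.Icc 1 n) ∧ ∑ u ∈ Finset.Icc 1 n, t u = R ∧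
            (2 * h + 1 < n → ∀ u ∈ Finset.Icc 1 n, (t u : ℤ) ≤ A (h + 1) u) ∧
            (2 * h + 1 = n → ∀ u ∈ Finset.Icc 1 n, (t u : ℤ) + t (n + 1 - u) ≤ A (h + 1) u)
        then (Fintype.card k : ℚ) ^
              (∑ j ∈ Finset.Icc 1 n, ∑ u ∈ Finset.Icc 1 n, if u < j then A h j * t u else 0) *
            (∏ u ∈ Finset.Icc 1 n, qbinom (Fintype.card k) (A h u + t u) (t u)) *
            eMat Φ n (shiftRows n h t A) LL
        else 0 := by
  obtain ⟨L, M⟩ := LL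
  have hmiddle (L' : Flags Φ n) : HasPosition B L L' ∧ HasPosition A L' M ↔
      ShrinksAt h R L L' ∧ HasPosition A L' M := and_congr_left fun hpos =>
    hasPosition_iff_shrinksAt hnondeg hh hn hBdiag fun j hj => by rw [← hroco j hj, hpos.roM_eq hj]
  rw [conv_eMat_eq_natCard, Nat.card_congr (Equiv.subtypeEquivRight hmiddle)]
  by_cases hex : ∃ t : ℕ → ℕ, (∀ u, t u ≠ 0 → u ∈ Finset.Icc 1 n) ∧
      ∑ u ∈ Finset.Icc 1 n, t u = R ∧ HasPosition (shiftRows n h t A) L M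
  · obtain ⟨t, hsupp, hsum, hpos⟩ := hex
    rw [natCard_shrinksAt hrefl hnondeg hh hn hA hsum hpos, finsum_eq_single _ t, if_pos, eMat_eq,
      if_pos hpos, mul_one]
    · exact ⟨hsupp, hsum, fun hn' u => hpos.le_of_shiftRows hn', fun hn' u =>
        hpos.add_le_of_shiftRows hh hn'⟩
    · intro t' hne
      split_ifs with ht'
      · rw [eMat_eq, if_neg fun hpos' => hne (hpos'.shift_unique hh hn hpos ht'.1 hsupp), mul_zero]
      · rfl
  · have : IsEmpty {L' // ShrinksAt h R L L' ∧ HasPosition A L' M} :=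
      ⟨fun L' => hex (L'.2.1.exists_hasPosition_shiftRows hnondeg hn L'.2.2)⟩
    rw [Nat.card_of_isEmpty, Nat.cast_zero, finsum_eq_zero_of_forall_eq_zero]
    intro t
    split_ifs with ht
    · rw [eMat_eq, if_neg fun hpos => hex ⟨t, ht.1, ht.2.1, hpos⟩, mul_zero]
    · rfl

/-- multiplication by a divided power of `e_h`, finite type `C`.  -/
theorem statement1 {k V : Type*} [Field k] [Fintype k] [AddCommGroup V] [Module k V]
    [FiniteDimensional k V]
    (hodd : Odd (Fintype.card k))
    (r d : ℕ) (hr : 1 ≤ r) (hd : 1 ≤ d)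
    (hdim : Module.finrank k V = 2 * d)
    (Φ : V →ₗ[k] V →ₗ[k] k)
    (halt : ∀ v : V, Φ v v = 0)
    (hnondeg : ∀ v : V, (∀ w : V, Φ v w = 0) → v = 0)
    (A B : ℕ → ℕ → ℤ)
    (hA : MemXiC (2 * r + 1) d A) (hB : MemXiC (2 * r + 1) d B)
    (hroco : ∀ i ∈ Finset.Icc 1 (2 * r + 1), roM (2 * r + 1) A i = coM (2 * r + 1) B i)
    (h R : ℕ) (hh1 : 1 ≤ h) (hhr : h ≤ r)
    (hBdiag : ∀ i ∈ Finset.Icc 1 (2 * r + 1), ∀ j ∈ Finset.Icc 1 (2 * r + 1), i ≠ j →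
      B i j = (R : ℤ) * Eth (2 * r + 1) h (h + 1) i j) :
    ∀ LL : Flags Φ (2 * r + 1) × Flags Φ (2 * r + 1),
      conv Φ (2 * r + 1) (eMat Φ (2 * r + 1) B) (eMat Φ (2 * r + 1) A) LL =
      ∑ᶠ t : ℕ → ℕ,
        if (∀ u, t u ≠ 0 → u ∈ Finset.Icc 1 (2 * r + 1)) ∧
            (∑ u ∈ Finset.Icc 1 (2 * r + 1), t u = R) ∧
            (h < r → ∀ u ∈ Finset.Icc 1 (2 * r + 1), (t u : ℤ) ≤ A (h + 1) u) ∧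
            (h = r → ∀ u ∈ Finset.Icc 1 (2 * r + 1),
              (t u : ℤ) + (t (2 * r + 2 - u) : ℤ) ≤ A (h + 1) u)
        then
          ((Fintype.card k : ℚ) ^
              (∑ j ∈ Finset.Icc 1 (2 * r + 1), ∑ u ∈ Finset.Icc 1 (2 * r + 1),
                if u < j then A h j * (t u : ℤ) else 0)) *
            (∏ u ∈ Finset.Icc 1 (2 * r + 1),
              qbinom (Fintype.card k : ℚ) (A h u + (t u : ℤ)) (t u)) *
            eMat Φ (2 * r + 1)
              (fun a b => A a b + ∑ u ∈ Finset.Icc 1 (2 * r + 1),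
                (t u : ℤ) * (Eth (2 * r + 1) h u a b - Eth (2 * r + 1) (h + 1) u a b)) LL
        else 0 := by
  have hrefl : Φ.IsRefl := LinearMap.IsAlt.isRefl halt
  have hlt : 2 * h + 1 < 2 * r + 1 ↔ h < r := by omega
  have heq : 2 * h + 1 = 2 * r + 1 ↔ h = r := by omega
  intro LL
  rw [statement1_general hrefl (hrefl.nondegenerate_iff_separatingLeft.2 hnondeg) hh1 (by omega)
    (hA.1 h (Finset.mem_Icc.2 (by omega))) hroco hBdiag LL]
  refine finsum_congr fun t => ?_
  congr 1
  rw [hlt, heq]
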